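/- Fix n ∈ ℕ, ν ∈ ℂ and t > 0 with D_{n,ν}(t) ≠ 0 and D_{n+1,ν}(t) ≠ 0, and let π_n, π_{n+1} (resp. π̃_n, π̃_{n+1}) be the monic left (resp. right) orthogonal polynomials. Define the reversed polynomial π̃*_k(z) = z^k · π̃_k(1/z). Then the Szegő-type recurrence relations hold as polynomial identities: π_{n+1}(z) = z·π_n(z) + π_{n+1}(0)·π̃*_n(z) and π̃*_{n+1}(z) = π̃*_n(z) + π̃_{n+1}(0)·z·π_n(z). -/

import Mathlib

/-!
Only the Toeplitz structure of the form matters: the moment `⟨z^j, z^k⟩` depends on `k - j` alone.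
Hence `⟨z p, z^(m+1)⟩ = ⟨p, z^m⟩`, and reversal exchanges the two sides of the form,
`⟨q*, z^m⟩ = ⟨z^(n-m), q⟩` for `q` of degree `n`. It follows that `z π_n` and `π̃*_n` are both
orthogonal to `z, …, z^n`, as are `π_{n+1}` and `π̃*_{n+1}`. In either recurrence the difference of
the two sides therefore has degree at most `n`, vanishes at `0`, and is orthogonal to
`z, …, z^n`; its `n` remaining coefficients solve a homogeneous linear system whose determinant is
`D_n ≠ 0`, so it is zero (`eq_zero_of_orthogonal`).
-/

/-- The modified Bessel function of the first kind `I_μ(t)`, for complex order `μ`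
and real argument `t`, defined by its convergent power series, with
`(t/2)^μ := exp(μ · log(t/2))` using the real logarithm. -/
noncomputable def besselI (μ : ℂ) (t : ℝ) : ℂ :=
  ∑' k : ℕ, Complex.exp ((2 * (k : ℂ) + μ) * (Real.log (t / 2) : ℂ)) /
    ((k.factorial : ℂ) * Complex.Gamma ((k : ℂ) + μ + 1))

/-- The Toeplitz determinant `D_{n,ν}(t) = det( I_{i-j-ν}(t) )_{i,j=0}^{n-1}`
(with `D_{0,ν}(t) = 1`). -/
noncomputable def toeplitzD (n : ℕ) (ν : ℂ) (t : ℝ) : ℂ :=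
  Matrix.det (Matrix.of fun i j : Fin n => besselI (((i : ℕ) : ℂ) - ((j : ℕ) : ℂ) - ν) t)

/-- The shifted Toeplitz determinant `D'¹_{n,ν}(t) = det( I_{i-j-1-ν}(t) )_{i,j=0}^{n-1}`
(with `D'¹_{0,ν}(t) = 1`). -/
noncomputable def toeplitzD1 (n : ℕ) (ν : ℂ) (t : ℝ) : ℂ :=
  Matrix.det (Matrix.of fun i j : Fin n => besselI (((i : ℕ) : ℂ) - ((j : ℕ) : ℂ) - 1 - ν) t)

/-- The bilinear form `⟨p,q⟩_t = Σ_{j,k} p_j q_k I_{k-j-ν}(t)` on polynomials, induced by the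
weight `w(s) = e^{(t/2)(s+1/s)} s^ν` on the Hankel loop. -/
noncomputable def besselForm (ν : ℂ) (t : ℝ) (p q : Polynomial ℂ) : ℂ :=
  ∑ j ∈ p.support, ∑ k ∈ q.support,
    p.coeff j * q.coeff k * besselI (((k : ℕ) : ℂ) - ((j : ℕ) : ℂ) - ν) t

/-- `p` is the `n`-th monic left orthogonal polynomial: `p` is monic of degree `n` and
`⟨p, z^m⟩_t = 0` for `m = 0, …, n-1`. -/
def IsLeftOP (ν : ℂ) (t : ℝ) (n : ℕ) (p : Polynomial ℂ) : Prop :=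
  p.Monic ∧ p.natDegree = n ∧ ∀ m < n, besselForm ν t p (Polynomial.X ^ m) = 0

/-- `q` is the `n`-th monic right orthogonal polynomial: `q` is monic of degree `n` and
`⟨z^m, q⟩_t = 0` for `m = 0, …, n-1`. -/
def IsRightOP (ν : ℂ) (t : ℝ) (n : ℕ) (q : Polynomial ℂ) : Prop :=
  q.Monic ∧ q.natDegree = n ∧ ∀ m < n, besselForm ν t (Polynomial.X ^ m) q = 0

open Polynomial in
/-- Any bound on the degree may replace the support in the moments of a polynomial. -/
lemma besselForm_X_pow_right (ν : ℂ) (t : ℝ) (p : ℂ[X]) (m N : ℕ) (hN : p.natDegree < N) :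
    besselForm ν t p (X ^ m) =
      ∑ j ∈ Finset.range N, p.coeff j * besselI ((m : ℂ) - (j : ℂ) - ν) t := by
  unfold besselForm
  simp only [← monomial_one_right_eq_X_pow, support_monomial m (one_ne_zero (α := ℂ)),
    Finset.sum_singleton, coeff_monomial_same, mul_one]
  apply Finset.sum_subset
  · exact fun j hj => Finset.mem_range.2 ((le_natDegree_of_mem_supp j hj).trans_lt hN)
  · intro j _ hj
    rw [notMem_support_iff.1 hj, zero_mul]

open Polynomial in
lemma besselForm_X_pow_left (ν : ℂ) (t : ℝ) (q : ℂ[X]) (m N : ℕ) (hN : q.natDegree < N) :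
    besselForm ν t (X ^ m) q =
      ∑ k ∈ Finset.range N, q.coeff k * besselI ((k : ℂ) - (m : ℂ) - ν) t := by
  unfold besselForm
  simp only [← monomial_one_right_eq_X_pow, support_monomial m (one_ne_zero (α := ℂ)),
    Finset.sum_singleton, coeff_monomial_same, one_mul]
  apply Finset.sum_subset
  · exact fun j hj => Finset.mem_range.2 ((le_natDegree_of_mem_supp j hj).trans_lt hN)
  · intro j _ hj
    rw [notMem_support_iff.1 hj, zero_mul]

open Polynomial in
lemma besselForm_sub_sub_C_mul (ν : ℂ) (t : ℝ) (a b d : ℂ[X]) (x : ℂ) (m : ℕ) :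
    besselForm ν t (a - b - C x * d) (X ^ m) =
      besselForm ν t a (X ^ m) - besselForm ν t b (X ^ m) - x * besselForm ν t d (X ^ m) := by
  set N := a.natDegree + b.natDegree + d.natDegree + (a - b - C x * d).natDegree + 1 with hN
  rw [besselForm_X_pow_right ν t (a - b - C x * d) m N (by omega),
    besselForm_X_pow_right ν t a m N (by omega), besselForm_X_pow_right ν t b m N (by omega),
    besselForm_X_pow_right ν t d m N (by omega), Finset.mul_sum, ← Finset.sum_sub_distrib,
    ← Finset.sum_sub_distrib]
  refine Finset.sum_congr rfl fun j _ => ?_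
  rw [coeff_sub, coeff_sub, coeff_C_mul]
  ring

open Polynomial in
/-- Multiplying both arguments by `z` leaves the form unchanged. -/
lemma besselForm_X_mul (ν : ℂ) (t : ℝ) (p : ℂ[X]) (m : ℕ) :
    besselForm ν t (X * p) (X ^ (m + 1)) = besselForm ν t p (X ^ m) := by
  have hd : (X * p).natDegree < p.natDegree + 1 + 1 := by
    have := natDegree_mul_le (p := (X : ℂ[X])) (q := p)
    rw [natDegree_X] at this
    omega
  rw [besselForm_X_pow_right ν t _ _ _ hd, besselForm_X_pow_right ν t p m _ (Nat.lt_succ_self _),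
    Finset.sum_range_succ']
  simp only [coeff_X_mul, coeff_X_mul_zero, zero_mul, add_zero]
  refine Finset.sum_congr rfl fun j _ => ?_
  congr 2
  push_cast
  ring

open Polynomial in
/-- Reversal exchanges the two sides of the form. -/
lemma besselForm_reverse (ν : ℂ) (t : ℝ) (q : ℂ[X]) (m : ℕ) (hm : m ≤ q.natDegree) :
    besselForm ν t q.reverse (X ^ m) = besselForm ν t (X ^ (q.natDegree - m)) q := by
  rw [besselForm_X_pow_right ν t _ _ (q.natDegree + 1)
      (Nat.lt_succ_of_le (reverse_natDegree_le q)),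
    besselForm_X_pow_left ν t _ _ (q.natDegree + 1) (Nat.lt_succ_self _),
    ← Finset.sum_range_reflect]
  refine Finset.sum_congr rfl fun k hk => ?_
  have hk' : k ≤ q.natDegree := Nat.lt_succ_iff.1 (Finset.mem_range.1 hk)
  have e : q.natDegree + 1 - 1 - k = q.natDegree - k := by omega
  rw [e, coeff_reverse, revAt_le (Nat.sub_le _ _), Nat.sub_sub_self hk']
  congr 2
  rw [Nat.cast_sub hk', Nat.cast_sub hm]
  ring

open Polynomial in
/-- A polynomial of degree at most `n` without constant term has `n` free coefficients, and its
orthogonality to `z, …, z^n` is a linear system for them with determinant `D_n`. -/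
lemma eq_zero_of_orthogonal (n : ℕ) (ν : ℂ) (t : ℝ) (hD : toeplitzD n ν t ≠ 0) (r : ℂ[X])
    (hdeg : ∀ j, n < j → r.coeff j = 0) (h0 : r.coeff 0 = 0)
    (horth : ∀ m < n, besselForm ν t r (X ^ (m + 1)) = 0) : r = 0 := by
  have hv : (fun j : Fin n => r.coeff (j + 1)) = 0 := by
    refine Matrix.eq_zero_of_mulVec_eq_zero hD ?_
    funext i
    have h := horth i i.2
    rw [besselForm_X_pow_right ν t r _ (n + 1)
      (Nat.lt_succ_of_le (natDegree_le_iff_coeff_eq_zero.2 hdeg)), Finset.sum_range_succ', h0,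
      zero_mul, add_zero, Finset.sum_range] at h
    rw [Pi.zero_apply, ← h]
    simp only [Matrix.mulVec, dotProduct, Matrix.of_apply]
    refine Finset.sum_congr rfl fun j _ => ?_
    rw [mul_comm]
    congr 2
    push_cast
    ring
  ext j
  rw [coeff_zero]
  rcases j with _ | j
  · exact h0
  · by_cases hj : j < n
    · exact congrFun hv ⟨j, hj⟩
    · exact hdeg _ (by omega)

open Polynomial in
lemma IsRightOP.besselForm_reverse_eq_zero {ν : ℂ} {t : ℝ} {n : ℕ} {q : ℂ[X]}
    (hq : IsRightOP ν t n q) {m : ℕ} (hm : m < n) :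
    besselForm ν t q.reverse (X ^ (m + 1)) = 0 := by
  obtain ⟨_, hd, ho⟩ := hq
  rw [besselForm_reverse ν t q _ (by omega)]
  exact ho _ (by omega)

open Polynomial in
lemma coeff_reverse_eq_zero_of_lt (q : ℂ[X]) {j : ℕ} (hj : q.natDegree < j) :
    q.reverse.coeff j = 0 :=
  coeff_eq_zero_of_natDegree_lt ((reverse_natDegree_le q).trans_lt hj)

/-- the Szegő-type recurrence relations
`π_{n+1}(z) = z·π_n(z) + π_{n+1}(0)·π̃*_n(z)` and
`π̃*_{n+1}(z) = π̃*_n(z) + π̃_{n+1}(0)·z·π_n(z)`, where `π̃*_k(z) = z^k·π̃_k(1/z)` is the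
reversed polynomial (`Polynomial.reverse`). -/
theorem szego_recurrence (n : ℕ) (ν : ℂ) (t : ℝ) (ht : 0 < t)
    (hD : toeplitzD n ν t ≠ 0) (hD' : toeplitzD (n + 1) ν t ≠ 0)
    (p p1 q q1 : Polynomial ℂ)
    (hp : IsLeftOP ν t n p) (hp1 : IsLeftOP ν t (n + 1) p1)
    (hq : IsRightOP ν t n q) (hq1 : IsRightOP ν t (n + 1) q1) :
    p1 = Polynomial.X * p + Polynomial.C (p1.coeff 0) * q.reverse ∧
    q1.reverse = q.reverse + Polynomial.C (q1.coeff 0) * (Polynomial.X * p) := by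
  obtain ⟨hpm, hpd, hpo⟩ := hp
  obtain ⟨hp1m, hp1d, hp1o⟩ := hp1
  have hqm := hq.1
  have hqd := hq.2.1
  have hq1m := hq1.1
  have hq1d := hq1.2.1
  have hpn : p.coeff n = 1 := by rw [← hpd]; exact hpm.coeff_natDegree
  have hp1n : p1.coeff (n + 1) = 1 := by rw [← hp1d]; exact hp1m.coeff_natDegree
  have hXp : ∀ m < n, besselForm ν t (Polynomial.X * p) (Polynomial.X ^ (m + 1)) = 0 :=
    fun m hm => (besselForm_X_mul ν t p m).trans (hpo m hm)
  constructor
  · rw [← sub_eq_zero, ← sub_sub]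
    refine eq_zero_of_orthogonal n ν t hD _ (fun j hj => ?_) ?_ fun m hm => ?_
    · obtain ⟨i, rfl⟩ : ∃ i, j = i + 1 := ⟨j - 1, by omega⟩
      rw [Polynomial.coeff_sub, Polynomial.coeff_sub, Polynomial.coeff_C_mul,
        Polynomial.coeff_X_mul, coeff_reverse_eq_zero_of_lt q (by omega)]
      rcases (Nat.lt_succ_iff.1 hj).eq_or_lt with rfl | hi
      · rw [hp1n, hpn]; ring
      · rw [Polynomial.coeff_eq_zero_of_natDegree_lt (p := p) (by omega),
          Polynomial.coeff_eq_zero_of_natDegree_lt (p := p1) (by omega)]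
        ring
    · rw [Polynomial.coeff_sub, Polynomial.coeff_sub, Polynomial.coeff_C_mul,
        Polynomial.coeff_X_mul_zero, Polynomial.coeff_zero_reverse, hqm.leadingCoeff]
      ring
    · rw [besselForm_sub_sub_C_mul, hp1o _ (by omega), hXp m hm,
        hq.besselForm_reverse_eq_zero hm]
      ring
  · rw [← sub_eq_zero, ← sub_sub]
    refine eq_zero_of_orthogonal n ν t hD _ (fun j hj => ?_) ?_ fun m hm => ?_
    · obtain ⟨i, rfl⟩ : ∃ i, j = i + 1 := ⟨j - 1, by omega⟩
      rw [Polynomial.coeff_sub, Polynomial.coeff_sub, Polynomial.coeff_C_mul,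
        Polynomial.coeff_X_mul, coeff_reverse_eq_zero_of_lt q (by omega)]
      rcases (Nat.lt_succ_iff.1 hj).eq_or_lt with rfl | hi
      · rw [Polynomial.coeff_reverse, hq1d, Polynomial.revAt_le le_rfl, Nat.sub_self, hpn]
        ring
      · rw [Polynomial.coeff_eq_zero_of_natDegree_lt (p := p) (by omega),
          coeff_reverse_eq_zero_of_lt q1 (by omega)]
        ring
    · rw [Polynomial.coeff_sub, Polynomial.coeff_sub, Polynomial.coeff_C_mul,
        Polynomial.coeff_X_mul_zero, Polynomial.coeff_zero_reverse, Polynomial.coeff_zero_reverse,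
        hqm.leadingCoeff, hq1m.leadingCoeff]
      ring
    · rw [besselForm_sub_sub_C_mul, hXp m hm, hq.besselForm_reverse_eq_zero hm,
        hq1.besselForm_reverse_eq_zero (by omega)]
      ring
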